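/- arXiv:1710.10051 — 3 statements merged into one kernel-verified Lean document; each statement's English description precedes it below -/
import Mathlib

section
/- Let γ:[0,1]→ℝ² be a closed regular curve of class H². Then the penalized elastic energy satisfies F(γ) = E(γ) + L(γ) ≥ 4π, with equality attained by the circle of radius 1. -/
/-- A regular planar curve of class `H²`, recorded through its components `x, y`,
their first derivatives `xd, yd` and second derivatives `xdd, ydd` on `[0,1]`,
together with the regularity (non-vanishing speed) and the integrability of the
(squared and absolute) curvature with respect to arclength. -/
structure RegularCurve where
  x : ℝ → ℝ
  y : ℝ → ℝ
  xd : ℝ → ℝ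
  yd : ℝ → ℝ
  xdd : ℝ → ℝ
  ydd : ℝ → ℝ
  hx : ∀ t ∈ Set.Icc (0:ℝ) 1, HasDerivWithinAt x (xd t) (Set.Icc 0 1) t
  hy : ∀ t ∈ Set.Icc (0:ℝ) 1, HasDerivWithinAt y (yd t) (Set.Icc 0 1) t
  hxd : ∀ t ∈ Set.Icc (0:ℝ) 1, HasDerivWithinAt xd (xdd t) (Set.Icc 0 1) t
  hyd : ∀ t ∈ Set.Icc (0:ℝ) 1, HasDerivWithinAt yd (ydd t) (Set.Icc 0 1) t
  regular : ∀ t ∈ Set.Icc (0:ℝ) 1, xd t ^ 2 + yd t ^ 2 ≠ 0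
  intE : IntervalIntegrable
    (fun t => (xd t * ydd t - xdd t * yd t) ^ 2 /
      ((xd t ^ 2 + yd t ^ 2) ^ 2 * Real.sqrt (xd t ^ 2 + yd t ^ 2)))
    MeasureTheory.volume 0 1
  intK : IntervalIntegrable
    (fun t => |xd t * ydd t - xdd t * yd t| / (xd t ^ 2 + yd t ^ 2))
    MeasureTheory.volume 0 1

namespace RegularCurve

/-- The elastic energy `∫ k² ds`, where `k = (x'y'' - x''y')/|γ'|³` is the scalar
curvature and `ds = |γ'| dx`. -/
noncomputable def elasticEnergy (γ : RegularCurve) : ℝ :=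
  ∫ t in (0:ℝ)..1, (γ.xd t * γ.ydd t - γ.xdd t * γ.yd t) ^ 2 /
    ((γ.xd t ^ 2 + γ.yd t ^ 2) ^ 2 * Real.sqrt (γ.xd t ^ 2 + γ.yd t ^ 2))

/-- The length `∫ 1 ds`. -/
noncomputable def length (γ : RegularCurve) : ℝ :=
  ∫ t in (0:ℝ)..1, Real.sqrt (γ.xd t ^ 2 + γ.yd t ^ 2)

/-- The total absolute curvature `∫ |k| ds`. -/
noncomputable def totalAbsCurvature (γ : RegularCurve) : ℝ :=
  ∫ t in (0:ℝ)..1, |γ.xd t * γ.ydd t - γ.xdd t * γ.yd t| / (γ.xd t ^ 2 + γ.yd t ^ 2)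

/-- A curve is closed if `γ(0) = γ(1)` and the unit tangents agree, `τ(0) = τ(1)`. -/
def IsClosedCurve (γ : RegularCurve) : Prop :=
  γ.x 0 = γ.x 1 ∧ γ.y 0 = γ.y 1 ∧
  γ.xd 0 / Real.sqrt (γ.xd 0 ^ 2 + γ.yd 0 ^ 2)
    = γ.xd 1 / Real.sqrt (γ.xd 1 ^ 2 + γ.yd 1 ^ 2) ∧
  γ.yd 0 / Real.sqrt (γ.xd 0 ^ 2 + γ.yd 0 ^ 2)
    = γ.yd 1 / Real.sqrt (γ.xd 1 ^ 2 + γ.yd 1 ^ 2)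

end RegularCurve

/-!
The velocity of a closed regular curve has a differentiable polar angle `θ`, and `∫ |k| ds` is the
total variation `∫ |θ'|`. Because the unit tangent closes up, `θ` changes by a multiple of `2π`. If
that multiple is nonzero, then `∫ |θ'| ≥ 2π`. If it is zero, `θ` runs through a loop in `ℝ`, which
stays within `(∫ |θ'|) / 4` of some `φ`; but by Rolle's theorem the tangent of the closed curve is
somewhere orthogonal to the direction `φ`, so `(∫ |θ'|) / 4 ≥ π / 2`. Either way `∫ |k| ds ≥ 2π`,
and `k² + 1 ≥ 2 |k|` gives `E + L ≥ 4π`.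
-/

open Set MeasureTheory
open scoped Real Topology

section Lifting

variable {a b : ℝ}

theorem exists_continuous_exp_eq_of_continuousOn_Icc (hab : a ≤ b) {z : ℝ → ℂ}
    (hz : ContinuousOn z (Icc a b)) (hz₀ : ∀ t ∈ Icc a b, z t ≠ 0) :
    ∃ w : ℝ → ℂ, Continuous w ∧ ∀ t ∈ Icc a b, Complex.exp (w t) = z t := by
  let g : ℝ → ℂ := IccExtend hab ((Icc a b).domRestrict z)
  have hg : Continuous g := hz.domRestrict.Icc_extend'
  have hg₀ : 0 ∉ g '' univ := by
    rintro ⟨t, -, ht⟩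
    exact hz₀ _ (projIcc a b hab t).2 ht
  have : ContractibleSpace (univ : Set ℝ) := convex_univ.contractibleSpace univ_nonempty
  have hR : IsSimplyConnected (univ : Set ℝ) := SimplyConnectedSpace.ofContractible univ
  obtain ⟨w, hw, hwg⟩ :=
    Complex.exists_continuousOn_eqOn_exp_comp hR isOpen_univ hg.continuousOn hg₀
  refine ⟨w, continuousOn_univ.1 hw, fun t ht => ?_⟩
  exact (hwg (mem_univ t)).trans (IccExtend_of_mem hab _ ht)

theorem hasDerivWithinAt_of_comp_left {𝕜 𝕜' : Type*} [NontriviallyNormedField 𝕜]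
    [NontriviallyNormedField 𝕜'] [NormedAlgebra 𝕜 𝕜'] {f : 𝕜' → 𝕜'} {g h : 𝕜 → 𝕜'} {f' h' : 𝕜'}
    {s : Set 𝕜} {t : 𝕜} (hg : ContinuousWithinAt g s t) (hf : HasDerivAt f f' (g t))
    (hh : HasDerivWithinAt h h' s t) (hf' : f' ≠ 0) (hcomp : EqOn (f ∘ g) h s) (ht : t ∈ s) :
    HasDerivWithinAt g (h' / f') s t := by
  have hg' := (hf.hasFDerivAt.restrictScalars 𝕜).hasFDerivWithinAt (s := univ)
    |>.of_comp_of_leftInverse (f'symm := f'⁻¹ • ContinuousLinearMap.id 𝕜 𝕜')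
      (hg.tendsto_nhdsWithin (mapsTo_univ g s)) hh.hasFDerivWithinAt
      (hcomp.eventuallyEq_of_mem self_mem_nhdsWithin) (fun x => by simp [hf', mul_comm x]) ht
  simpa [div_eq_inv_mul] using hg'.hasDerivWithinAt

theorem exists_polar_angle (hab : a ≤ b) {z z' : ℝ → ℂ}
    (hz : ∀ t ∈ Icc a b, HasDerivWithinAt z (z' t) (Icc a b) t) (hz₀ : ∀ t ∈ Icc a b, z t ≠ 0) :
    ∃ θ : ℝ → ℝ, (∀ t ∈ Icc a b, HasDerivWithinAt θ (z' t / z t).im (Icc a b) t) ∧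
      ∀ t ∈ Icc a b, z t = ‖z t‖ * Complex.exp (θ t * Complex.I) := by
  obtain ⟨w, hw, hexp⟩ := exists_continuous_exp_eq_of_continuousOn_Icc hab
    (fun t ht => (hz t ht).continuousWithinAt) hz₀
  have hderiv : ∀ t ∈ Icc a b, HasDerivWithinAt w (z' t / z t) (Icc a b) t := fun t ht =>
    hasDerivWithinAt_of_comp_left hw.continuousWithinAt (hexp t ht ▸ Complex.hasDerivAt_exp (w t))
      (hz t ht) (hz₀ t ht) hexp ht
  refine ⟨fun t => (w t).im, fun t ht => ?_, fun t ht => ?_⟩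
  · exact Complex.imCLM.hasFDerivAt.comp_hasDerivWithinAt t (hderiv t ht)
  · rw [← hexp t ht, Complex.norm_exp, Complex.ofReal_exp, ← Complex.exp_add, Complex.re_add_im]

end Lifting

section Loops

variable {a b : ℝ}

theorem dist_le_integral_norm_deriv_sub {E : Type*} [NormedAddCommGroup E] [NormedSpace ℝ E]
    {f f' : ℝ → E} (hf : ∀ t ∈ Icc a b, HasDerivWithinAt f (f' t) (Icc a b) t)
    (hf' : IntervalIntegrable (fun t => ‖f' t‖) volume a b) {s t : ℝ} (hs : a ≤ s) (hst : s ≤ t)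
    (ht : t ≤ b) :
    dist (f s) (f t) ≤ (∫ u in a..t, ‖f' u‖) - ∫ u in a..s, ‖f' u‖ := by
  have hsub : Icc s t ⊆ Icc a b := Icc_subset_Icc hs ht
  have hderiv : ∀ u ∈ Ioo s t, HasDerivAt f (f' u) u := fun u hu =>
    (hf u (hsub (Ioo_subset_Icc_self hu))).hasDerivAt
      (Icc_mem_nhds (hs.trans_lt hu.1) (hu.2.trans_le ht))
  have hint : ∀ {c d : ℝ}, a ≤ c → c ≤ d → d ≤ b →
      IntervalIntegrable (fun u => ‖f' u‖) volume c d := fun hc hcd hd =>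
    hf'.mono_set (by
      rw [uIcc_of_le hcd, uIcc_of_le (hc.trans (hcd.trans hd))]; exact Icc_subset_Icc hc hd)
  rw [intervalIntegral.integral_interval_sub_left (hint le_rfl (hs.trans hst) ht)
    (hint le_rfl hs (hst.trans ht)), dist_comm, dist_eq_norm]
  exact norm_sub_le_integral_of_norm_deriv_le_of_le hst
    (fun u hu => ((hf u (hsub hu)).continuousWithinAt).mono hsub)
    (fun u hu => (hderiv u hu).differentiableAt.differentiableWithinAt)
    (.of_forall fun u hu => by rw [(hderiv u hu).deriv]) (hint hs hst ht)

theorem exists_forall_dist_le_of_loop {E : Type*} [NormedAddCommGroup E] [NormedSpace ℝ E]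
    {f : ℝ → E} {V : ℝ → ℝ} (hab : a ≤ b) (hV : ContinuousOn V (Icc a b))
    (hf : ∀ s t, a ≤ s → s ≤ t → t ≤ b → dist (f s) (f t) ≤ V t - V s) (hloop : f a = f b) :
    ∃ p, ∀ t ∈ Icc a b, dist (f t) p ≤ (V b - V a) / 4 := by
  have hVab : V a ≤ V b := sub_nonneg.1 (dist_nonneg.trans (hf a b le_rfl hab le_rfl))
  obtain ⟨c, hc, hVc⟩ : (V a + V b) / 2 ∈ V '' Icc a b :=
    intermediate_value_Icc hab hV ⟨by linarith, by linarith⟩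
  -- `f a` and `f c` cut the loop into two arcs of equal length; from any point of either arc, the
  -- distances to these two points add up to at most half the length of the loop.
  refine ⟨midpoint ℝ (f a) (f c), fun t ht => ?_⟩
  have hmid : dist (f t) (midpoint ℝ (f a) (f c)) ≤ (dist (f t) (f a) + dist (f t) (f c)) / 2 := by
    simpa only [midpoint_self] using dist_midpoint_midpoint_le (f t) (f t) (f a) (f c)
  suffices dist (f t) (f a) + dist (f t) (f c) ≤ (V b - V a) / 2 by linarith
  rcases le_total t c with htc | hct
  · have hat := hf a t le_rfl ht.1 ht.2
    have htc := hf t c ht.1 htc hc.2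
    rw [dist_comm] at hat
    linarith
  · have hct := hf c t hc.1 hct ht.2
    have htb := hf t b ht.1 ht.2 le_rfl
    rw [dist_comm] at hct
    rw [hloop]
    linarith

theorem exists_cos_sub_eq_zero_of_loop {z : ℝ → ℂ} {ρ θ : ℝ → ℝ} (hab : a < b)
    (hz : ContinuousOn z (Icc a b))
    (hz' : ∀ t ∈ Ioo a b, HasDerivAt z (ρ t * Complex.exp (θ t * Complex.I)) t)
    (hρ : ∀ t ∈ Ioo a b, ρ t ≠ 0) (hloop : z a = z b) (φ : ℝ) :
    ∃ t ∈ Ioo a b, Real.cos (θ t - φ) = 0 := by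
  let e : ℂ := Complex.exp (-φ * Complex.I)
  have hcomp : ∀ t, (e * (ρ t * Complex.exp (θ t * Complex.I))).re =
      ρ t * Real.cos (θ t - φ) := fun t => by
    rw [mul_left_comm, ← Complex.exp_add, ← add_mul, Complex.re_ofReal_mul, neg_add_eq_sub,
      ← Complex.ofReal_sub, Complex.exp_ofReal_mul_I_re]
  obtain ⟨t, ht, hzero⟩ := exists_hasDerivAt_eq_zero hab (f := fun t => (e * z t).re)
    (Complex.continuous_re.comp_continuousOn (continuousOn_const.mul hz)) (by rw [hloop])
    fun t ht => Complex.reCLM.hasFDerivAt.comp_hasDerivAt t ((hz' t ht).const_mul e)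
  have hzero : ρ t * Real.cos (θ t - φ) = 0 := (hcomp t).symm.trans hzero
  exact ⟨t, ht, (mul_eq_zero.1 hzero).resolve_left (hρ t ht)⟩

theorem pi_div_two_le_abs_of_cos_eq_zero {x : ℝ} (hx : Real.cos x = 0) : π / 2 ≤ |x| := by
  by_contra! hlt
  exact (Real.cos_pos_of_mem_Ioo (abs_lt.1 hlt)).ne' hx

theorem eq_or_two_pi_le_dist_of_exp_mul_I_eq {x y : ℝ}
    (h : Complex.exp (x * Complex.I) = Complex.exp (y * Complex.I)) : x = y ∨ 2 * π ≤ dist x y := by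
  obtain ⟨n, hn⟩ := Circle.exp_eq_exp.1 (Circle.ext h)
  rcases eq_or_ne n 0 with rfl | hn₀
  · left; simpa using hn
  · right
    have hn₁ : (1 : ℝ) ≤ |(n : ℝ)| := mod_cast Int.one_le_abs hn₀
    rw [Real.dist_eq, hn, add_sub_cancel_left, abs_mul, abs_of_pos Real.two_pi_pos]
    exact le_mul_of_one_le_left Real.two_pi_pos.le hn₁

/-- Fenchel's inequality for plane curves: since the polar angle of `z'` has derivative
`Im (z'' / z')`, the integral is the total absolute curvature. -/
theorem two_pi_le_integral_abs_im_div_of_closed {z z' z'' : ℝ → ℂ} (hab : a < b)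
    (hz : ∀ t ∈ Icc a b, HasDerivWithinAt z (z' t) (Icc a b) t)
    (hz' : ∀ t ∈ Icc a b, HasDerivWithinAt z' (z'' t) (Icc a b) t)
    (hz'₀ : ∀ t ∈ Icc a b, z' t ≠ 0)
    (hint : IntervalIntegrable (fun t => |(z'' t / z' t).im|) volume a b)
    (hloop : z a = z b) (htangent : z' a / ‖z' a‖ = z' b / ‖z' b‖) :
    2 * π ≤ ∫ t in a..b, |(z'' t / z' t).im| := by
  obtain ⟨θ, hθ, hpolar⟩ := exists_polar_angle hab.le hz' hz'₀
  let V : ℝ → ℝ := fun t => ∫ u in a..t, |(z'' u / z' u).im|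
  have hVa : V a = 0 := intervalIntegral.integral_same
  have hdist : ∀ s t, a ≤ s → s ≤ t → t ≤ b → dist (θ s) (θ t) ≤ V t - V s :=
    fun s t => dist_le_integral_norm_deriv_sub hθ hint
  have hexp : ∀ t ∈ Icc a b, Complex.exp (θ t * Complex.I) = z' t / ‖z' t‖ := fun t ht => by
    rw [eq_div_iff (mod_cast norm_ne_zero_iff.2 (hz'₀ t ht)), mul_comm]
    exact (hpolar t ht).symm
  have hends : Complex.exp (θ a * Complex.I) = Complex.exp (θ b * Complex.I) := by
    rw [hexp a (left_mem_Icc.2 hab.le), hexp b (right_mem_Icc.2 hab.le), htangent]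
  suffices 2 * π ≤ V b - V a by rwa [hVa, sub_zero] at this
  rcases eq_or_two_pi_le_dist_of_exp_mul_I_eq hends with hθab | hwind
  · have hV : ContinuousOn V (Icc a b) := by
      simpa only [uIcc_of_le hab.le] using
        intervalIntegral.continuousOn_primitive_interval' hint left_mem_uIcc
    obtain ⟨φ, hφ⟩ := exists_forall_dist_le_of_loop hab.le hV hdist hθab
    obtain ⟨t, ht, hcos⟩ := exists_cos_sub_eq_zero_of_loop (ρ := fun t => ‖z' t‖) hab
      (fun t ht => (hz t ht).continuousWithinAt)
      (fun t ht => by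
        rw [← hpolar t (Ioo_subset_Icc_self ht)]
        exact (hz t (Ioo_subset_Icc_self ht)).hasDerivAt (Icc_mem_nhds ht.1 ht.2))
      (fun t ht => norm_ne_zero_iff.2 (hz'₀ t (Ioo_subset_Icc_self ht))) hloop φ
    have hfar : π / 2 ≤ dist (θ t) φ := pi_div_two_le_abs_of_cos_eq_zero hcos
    linarith [hφ t (Ioo_subset_Icc_self ht)]
  · exact hwind.trans (hdist a b le_rfl hab.le le_rfl)

end Loops

theorem two_mul_abs_le_sq_div_add (k : ℝ) {r : ℝ} (hr : 0 < r) : 2 * |k| ≤ k ^ 2 / r + r := by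
  rw [div_add' _ _ _ hr.ne', le_div_iff₀ hr]
  nlinarith [sq_nonneg (|k| - r), sq_abs k]

theorem hasDerivAt_cos_const_mul (ω t : ℝ) :
    HasDerivAt (fun s => Real.cos (ω * s)) (-(ω * Real.sin (ω * t))) t := by
  simpa [mul_comm] using ((hasDerivAt_id t).const_mul ω).cos

theorem hasDerivAt_sin_const_mul (ω t : ℝ) :
    HasDerivAt (fun s => Real.sin (ω * s)) (ω * Real.cos (ω * t)) t := by
  simpa [mul_comm] using ((hasDerivAt_id t).const_mul ω).sin

theorem neg_mul_sin_sq_add_mul_cos_sq (ω t : ℝ) :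
    (-(ω * Real.sin (ω * t))) ^ 2 + (ω * Real.cos (ω * t)) ^ 2 = ω ^ 2 := by
  linear_combination ω ^ 2 * Real.sin_sq_add_cos_sq (ω * t)

theorem hasDerivWithinAt_ofReal_add_ofReal_mul_I {x y : ℝ → ℝ} {x' y' t : ℝ} {s : Set ℝ}
    (hx : HasDerivWithinAt x x' s t) (hy : HasDerivWithinAt y y' s t) :
    HasDerivWithinAt (fun u => (x u + y u * Complex.I : ℂ)) (x' + y' * Complex.I) s t :=
  hx.ofReal_comp.add (hy.ofReal_comp.mul_const Complex.I)

namespace RegularCurve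

/-- The position `γ(t)`, as a point of the complex plane. -/
def position (γ : RegularCurve) (t : ℝ) : ℂ := γ.x t + γ.y t * Complex.I

/-- The velocity `γ'(t)`, as a complex number. -/
def velocity (γ : RegularCurve) (t : ℝ) : ℂ := γ.xd t + γ.yd t * Complex.I

/-- The acceleration `γ''(t)`, as a complex number. -/
def acceleration (γ : RegularCurve) (t : ℝ) : ℂ := γ.xdd t + γ.ydd t * Complex.I

/-- The angular velocity `k |γ'|` of the unit tangent with respect to the parameter `t`. -/
noncomputable def turningRate (γ : RegularCurve) (t : ℝ) : ℝ :=
  (γ.acceleration t / γ.velocity t).im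

variable (γ : RegularCurve)

theorem norm_velocity (t : ℝ) : ‖γ.velocity t‖ = √(γ.xd t ^ 2 + γ.yd t ^ 2) :=
  Complex.norm_add_mul_I _ _

theorem turningRate_eq_div (t : ℝ) :
    γ.turningRate t =
      (γ.xd t * γ.ydd t - γ.xdd t * γ.yd t) / (γ.xd t ^ 2 + γ.yd t ^ 2) := by
  simp only [turningRate, acceleration, velocity, Complex.div_im, Complex.normSq_add_mul_I]
  simp [← sub_div, mul_comm]

theorem abs_turningRate_eq_div (t : ℝ) :
    |γ.turningRate t| =
      |γ.xd t * γ.ydd t - γ.xdd t * γ.yd t| / (γ.xd t ^ 2 + γ.yd t ^ 2) := by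
  rw [turningRate_eq_div, abs_div, abs_of_nonneg (a := _ ^ 2 + _) (by positivity)]

theorem turningRate_sq_div_norm_velocity (t : ℝ) :
    γ.turningRate t ^ 2 / ‖γ.velocity t‖ =
      (γ.xd t * γ.ydd t - γ.xdd t * γ.yd t) ^ 2 /
        ((γ.xd t ^ 2 + γ.yd t ^ 2) ^ 2 * √(γ.xd t ^ 2 + γ.yd t ^ 2)) := by
  rw [turningRate_eq_div, norm_velocity, div_pow, div_div]

theorem velocity_ne_zero {t : ℝ} (ht : t ∈ Icc (0 : ℝ) 1) : γ.velocity t ≠ 0 := by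
  rw [← norm_ne_zero_iff, norm_velocity, Real.sqrt_ne_zero (by positivity)]
  exact γ.regular t ht

theorem continuousOn_velocity : ContinuousOn γ.velocity (Icc 0 1) := fun t ht =>
  (hasDerivWithinAt_ofReal_add_ofReal_mul_I (γ.hxd t ht) (γ.hyd t ht)).continuousWithinAt

theorem intervalIntegrable_abs_turningRate :
    IntervalIntegrable (fun t => |γ.turningRate t|) volume 0 1 := by
  simpa only [abs_turningRate_eq_div] using γ.intK

variable {γ} in
theorem IsClosedCurve.two_pi_le_totalAbsCurvature (hγ : γ.IsClosedCurve) :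
    2 * π ≤ γ.totalAbsCurvature := by
  obtain ⟨hx, hy, hxd, hyd⟩ := hγ
  have hloop : γ.position 0 = γ.position 1 := by simp only [position, hx, hy]
  have htangent : γ.velocity 0 / ‖γ.velocity 0‖ = γ.velocity 1 / ‖γ.velocity 1‖ := by
    simp only [norm_velocity]
    apply Complex.ext <;> simpa [velocity]
  have hfenchel := two_pi_le_integral_abs_im_div_of_closed zero_lt_one
    (fun t ht => hasDerivWithinAt_ofReal_add_ofReal_mul_I (γ.hx t ht) (γ.hy t ht))
    (fun t ht => hasDerivWithinAt_ofReal_add_ofReal_mul_I (γ.hxd t ht) (γ.hyd t ht))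
    (fun t => γ.velocity_ne_zero) γ.intervalIntegrable_abs_turningRate hloop htangent
  exact hfenchel.trans_eq (intervalIntegral.integral_congr fun t _ => γ.abs_turningRate_eq_div t)

theorem two_mul_totalAbsCurvature_le : 2 * γ.totalAbsCurvature ≤ γ.elasticEnergy + γ.length := by
  have hE := γ.intE
  have hL : IntervalIntegrable (fun t => ‖γ.velocity t‖) volume 0 1 :=
    (γ.continuousOn_velocity.norm).intervalIntegrable_of_Icc zero_le_one
  simp only [← turningRate_sq_div_norm_velocity] at hE
  simp only [totalAbsCurvature, elasticEnergy, length, ← abs_turningRate_eq_div,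
    ← turningRate_sq_div_norm_velocity]
  simp only [← norm_velocity]
  rw [← intervalIntegral.integral_add hE hL, ← intervalIntegral.integral_const_mul]
  exact intervalIntegral.integral_mono_on zero_le_one
    (γ.intervalIntegrable_abs_turningRate.const_mul 2) (hE.add hL) fun t ht =>
      two_mul_abs_le_sq_div_add _ (norm_pos_iff.2 (γ.velocity_ne_zero ht))

/-- The unit circle, traversed once counterclockwise at constant speed `2π`. -/
noncomputable def unitCircle : RegularCurve where
  x t := Real.cos (2 * π * t)
  y t := Real.sin (2 * π * t)
  xd t := -(2 * π * Real.sin (2 * π * t))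
  yd t := 2 * π * Real.cos (2 * π * t)
  xdd t := -(2 * π * (2 * π * Real.cos (2 * π * t)))
  ydd t := 2 * π * -(2 * π * Real.sin (2 * π * t))
  hx t _ := (hasDerivAt_cos_const_mul _ t).hasDerivWithinAt
  hy t _ := (hasDerivAt_sin_const_mul _ t).hasDerivWithinAt
  hxd t _ := ((hasDerivAt_sin_const_mul _ t).const_mul _).neg.hasDerivWithinAt
  hyd t _ := ((hasDerivAt_cos_const_mul _ t).const_mul _).hasDerivWithinAt
  regular t _ := by rw [neg_mul_sin_sq_add_mul_cos_sq]; positivity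
  intE := by
    simp only [neg_mul_sin_sq_add_mul_cos_sq]
    exact Continuous.intervalIntegrable (by fun_prop) 0 1
  intK := by
    simp only [neg_mul_sin_sq_add_mul_cos_sq]
    exact Continuous.intervalIntegrable (by fun_prop) 0 1

theorem norm_velocity_unitCircle (t : ℝ) : ‖unitCircle.velocity t‖ = 2 * π := by
  rw [norm_velocity]
  exact (congrArg _ (neg_mul_sin_sq_add_mul_cos_sq _ t)).trans (Real.sqrt_sq Real.two_pi_pos.le)

theorem turningRate_unitCircle (t : ℝ) : unitCircle.turningRate t = 2 * π := by
  rw [turningRate_eq_div]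
  simp only [unitCircle, neg_mul_sin_sq_add_mul_cos_sq]
  rw [div_eq_iff (by positivity)]
  linear_combination (2 * π) ^ 3 * Real.sin_sq_add_cos_sq (2 * π * t)

theorem isClosedCurve_unitCircle : unitCircle.IsClosedCurve := by
  simp [IsClosedCurve, unitCircle]

theorem elasticEnergy_unitCircle : unitCircle.elasticEnergy = 2 * π := by
  simp only [elasticEnergy, ← turningRate_sq_div_norm_velocity, turningRate_unitCircle,
    norm_velocity_unitCircle, intervalIntegral.integral_const]
  field_simp
  simp

theorem length_unitCircle : unitCircle.length = 2 * π := by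
  simp [length, ← norm_velocity, norm_velocity_unitCircle]

end RegularCurve

/-- For every closed regular curve of class `H^2` in the plane, the
penalized elastic energy satisfies `F = E + L ≥ 4π`, with equality attained by
the circle of radius `1`. -/
theorem penalized_energy_ge_four_pi :
    (∀ γ : RegularCurve, γ.IsClosedCurve →
      4 * Real.pi ≤ γ.elasticEnergy + γ.length) ∧
    ∃ γ : RegularCurve, γ.IsClosedCurve ∧
      (∀ t, γ.x t = Real.cos (2 * Real.pi * t)) ∧
      (∀ t, γ.y t = Real.sin (2 * Real.pi * t)) ∧
      γ.elasticEnergy + γ.length = 4 * Real.pi := by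
  refine ⟨fun γ hγ => ?_, .unitCircle, RegularCurve.isClosedCurve_unitCircle,
    fun _ => rfl, fun _ => rfl, ?_⟩
  · calc
      4 * Real.pi = 2 * (2 * Real.pi) := by ring
      _ ≤ 2 * γ.totalAbsCurvature := by gcongr; exact hγ.two_pi_le_totalAbsCurvature
      _ ≤ γ.elasticEnergy + γ.length := γ.two_mul_totalAbsCurvature_le
  · rw [RegularCurve.elasticEnergy_unitCircle, RegularCurve.length_unitCircle]
    ring
end

section
/- Let δ>0 and let γ=(x,y):I→ℝ² be a smooth curve parametrized by arclength whose scalar curvature k satisfies the elastica equation 2k'' + k³ - δk = 0 on the interval I. Assume that the conserved quantity (k')² + (k²/2 - δ/2)² (which is constant on I) is strictly positive, and set λ>0 with λ² = (k')² + (k²/2 - δ/2)². Then there is an isometry Φ of ℝ² such that the components (x̃,ỹ) of Φ∘γ satisfy the dynamical system x̃'' = λ ỹ ỹ' and ỹ'' = -λ ỹ x̃' on I; indeed one may take ỹ = -k/λ and x̃' = (k²/2 - δ/2)/λ. -/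
/-!
Identify `ℝ²` with `ℂ`. For a unit-speed curve the Frenet equation says that the tangent `T` solves
the linear equation `T' = k i T`. The elastica equation says exactly that
`W = ((k² - δ) / 2 - i k') / λ` solves the same equation, and the first integral says that `W` is
a unit vector. Hence `W = exp (iθ) T` for a constant angle `θ`; integrating the imaginary part of
this identity gives `ỹ = -k / λ` after a translation, and multiplying it by `k i` gives the
dynamical system.
-/

open Complex ComplexConjugate Filter Set Topology

theorem inner_eq_zero_of_hasDerivAt_of_norm_eventually_eq {E : Type*} [NormedAddCommGroup E]
    [InnerProductSpace ℝ E] {f : ℝ → E} {f' : E} {t r : ℝ} (hf : HasDerivAt f f' t)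
    (hr : ∀ᶠ s in 𝓝 t, ‖f s‖ = r) : inner ℝ (f t) f' = 0 := by
  have hconst : HasDerivAt (‖f ·‖ ^ 2) 0 t :=
    (hasDerivAt_const t (r ^ 2)).congr_of_eventuallyEq <| hr.mono fun s hs ↦ by
      simp only [hs]
  simpa using hf.norm_sq.unique hconst

/-- The signed curvature of a unit-speed plane curve in terms of its velocity `v` and its
acceleration `a`, with the plane identified with `ℂ`; it is the determinant of `v` and `a`. -/
def signedCurvature (v a : ℂ) : ℝ := (conj v * a).im

theorem signedCurvature_mk (x₁ y₁ x₂ y₂ : ℝ) :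
    signedCurvature ⟨x₁, y₁⟩ ⟨x₂, y₂⟩ = x₁ * y₂ - x₂ * y₁ := by
  simp only [signedCurvature, mul_im, conj_re, conj_im]
  ring

theorem eq_signedCurvature_mul_I_mul {T : ℝ → ℂ} {T' : ℂ} {t : ℝ} (hT : HasDerivAt T T' t)
    (hunit : ∀ᶠ s in 𝓝 t, ‖T s‖ = 1) : T' = signedCurvature (T t) T' * I * T t := by
  have horth : (T' * conj (T t)).re = 0 := by
    simpa only [Complex.inner] using inner_eq_zero_of_hasDerivAt_of_norm_eventually_eq hT hunit
  have hnormal : conj (T t) * T' = signedCurvature (T t) T' * I := by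
    rw [mul_comm] at horth
    simpa only [signedCurvature, horth, ofReal_zero, zero_add] using
      (re_add_im (conj (T t) * T')).symm
  have hone : conj (T t) * T t = 1 := by
    rw [conj_mul', hunit.self_of_nhds, ofReal_one, one_pow]
  linear_combination T t * hnormal - T' * hone

theorem hasDerivAt_complex_mk {x y : ℝ → ℝ} {x' y' t : ℝ} (hx : HasDerivAt x x' t)
    (hy : HasDerivAt y y' t) : HasDerivAt (fun s ↦ (⟨x s, y s⟩ : ℂ)) ⟨x', y'⟩ t := by
  simpa only [mk_eq_add_mul_I] using hx.ofReal_comp.fun_add (hy.ofReal_comp.mul_const I)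

theorem norm_mk_eq_one {a b : ℝ} (h : a ^ 2 + b ^ 2 = 1) : ‖(⟨a, b⟩ : ℂ)‖ = 1 := by
  rw [← sq_eq_sq₀ (norm_nonneg _) zero_le_one, Complex.sq_norm, normSq_mk]
  linear_combination h

theorem re_exp_ofReal_mul_I_mul_mk (θ a b : ℝ) :
    (exp (θ * I) * ⟨a, b⟩).re = Real.cos θ * a - Real.sin θ * b := by
  rw [mul_re, exp_ofReal_mul_I_re, exp_ofReal_mul_I_im]

theorem im_exp_ofReal_mul_I_mul_mk (θ a b : ℝ) :
    (exp (θ * I) * ⟨a, b⟩).im = Real.sin θ * a + Real.cos θ * b := by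
  rw [mul_im, exp_ofReal_mul_I_re, exp_ofReal_mul_I_im, add_comm]

theorem exists_eqOn_exp_mul_of_hasDerivAt_mul {s : Set ℝ} (hs : IsOpen s) (hs' : IsPreconnected s)
    {f g q : ℝ → ℂ} (hf : ∀ t ∈ s, HasDerivAt f (q t * f t) t)
    (hg : ∀ t ∈ s, HasDerivAt g (q t * g t) t) (hg₀ : ∀ t ∈ s, g t ≠ 0)
    (hnorm : ∀ t ∈ s, ‖f t‖ = ‖g t‖) :
    ∃ θ : ℝ, EqOn f (fun t ↦ exp (θ * I) * g t) s := by
  rcases s.eq_empty_or_nonempty with rfl | ⟨a, ha⟩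
  · exact ⟨0, eqOn_empty _ _⟩
  have hf₀ : ∀ t ∈ s, f t ≠ 0 := fun t ht ↦
    norm_ne_zero_iff.mp (hnorm t ht ▸ norm_ne_zero_iff.mpr (hg₀ t ht))
  have hlogDeriv : EqOn (logDeriv f) (logDeriv g) s := fun t ht ↦ by
    rw [logDeriv_apply, logDeriv_apply, (hf t ht).deriv, (hg t ht).deriv,
      mul_div_cancel_right₀ _ (hf₀ t ht), mul_div_cancel_right₀ _ (hg₀ t ht)]
  obtain ⟨c, -, hc⟩ := (logDeriv_eqOn_iff
    (fun t ht ↦ (hf t ht).differentiableAt.differentiableWithinAt)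
    (fun t ht ↦ (hg t ht).differentiableAt.differentiableWithinAt) hs hs' hg₀ hf₀).mp hlogDeriv
  have hc_norm : ‖c‖ = 1 := by
    have h := hnorm a ha
    rwa [hc ha, Pi.smul_apply, norm_smul, mul_eq_right₀ (norm_ne_zero_iff.mpr (hg₀ a ha))] at h
  obtain ⟨θ, rfl⟩ := (norm_eq_one_iff c).mp hc_norm
  exact ⟨θ, hc⟩

section Elastica

/-- The tangent `(x̃', ỹ') = ((k² / 2 - δ / 2) / λ, -k' / λ)` of the elastica in its normal
position, as a complex number, where `k₁` stands for the derivative of the curvature `k`. -/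
noncomputable def elasticaTangent (δ lam : ℝ) (k k₁ : ℝ → ℝ) (t : ℝ) : ℂ :=
  ⟨(k t ^ 2 / 2 - δ / 2) / lam, -(k₁ t) / lam⟩

variable {δ lam : ℝ} {k k₁ : ℝ → ℝ}

theorem norm_elasticaTangent {t : ℝ} (hlam : lam ≠ 0)
    (henergy : k₁ t ^ 2 + (k t ^ 2 / 2 - δ / 2) ^ 2 = lam ^ 2) :
    ‖elasticaTangent δ lam k k₁ t‖ = 1 := by
  refine norm_mk_eq_one ?_
  rw [div_pow, div_pow, neg_sq, ← add_div, add_comm, henergy, div_self (pow_ne_zero 2 hlam)]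

theorem hasDerivAt_elasticaTangent {t k₂ : ℝ} (hk : HasDerivAt k (k₁ t) t)
    (hk₁ : HasDerivAt k₁ k₂ t) (hode : 2 * k₂ + k t ^ 3 - δ * k t = 0) :
    HasDerivAt (elasticaTangent δ lam k k₁) (k t * I * elasticaTangent δ lam k k₁ t) t := by
  have hre := (((hk.fun_pow 2).div_const 2).sub_const (δ / 2)).div_const lam
  have him := hk₁.fun_neg.div_const lam
  refine (hasDerivAt_complex_mk hre him).congr_deriv (Complex.ext ?_ ?_)
  · rw [mul_assoc (k t : ℂ), re_ofReal_mul, I_mul_re, elasticaTangent]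
    ring
  · rw [mul_assoc (k t : ℂ), im_ofReal_mul, I_mul_im, elasticaTangent]
    linear_combination (-1 / (2 * lam)) * hode

variable {k₂ : ℝ → ℝ} {s : Set ℝ} {γ T : ℝ → ℂ}

theorem exists_exp_mul_eq_elasticaTangent (hs : IsOpen s) (hs' : IsPreconnected s) (hlam : lam ≠ 0)
    (hT : ∀ t ∈ s, HasDerivAt T (k t * I * T t) t) (hunit : ∀ t ∈ s, ‖T t‖ = 1)
    (hk : ∀ t ∈ s, HasDerivAt k (k₁ t) t) (hk₁ : ∀ t ∈ s, HasDerivAt k₁ (k₂ t) t)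
    (hode : ∀ t ∈ s, 2 * k₂ t + k t ^ 3 - δ * k t = 0)
    (henergy : ∀ t ∈ s, k₁ t ^ 2 + (k t ^ 2 / 2 - δ / 2) ^ 2 = lam ^ 2) :
    ∃ θ : ℝ, ∀ t ∈ s, exp (θ * I) * T t = elasticaTangent δ lam k k₁ t := by
  obtain ⟨θ, hθ⟩ := exists_eqOn_exp_mul_of_hasDerivAt_mul hs hs'
    (fun t ht ↦ hasDerivAt_elasticaTangent (hk t ht) (hk₁ t ht) (hode t ht)) hT
    (fun t ht ↦ norm_ne_zero_iff.mp (by rw [hunit t ht]; exact one_ne_zero))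
    (fun t ht ↦ by rw [hunit t ht, norm_elasticaTangent hlam (henergy t ht)])
  exact ⟨θ, fun t ht ↦ (hθ ht).symm⟩

theorem exists_im_mul_add_eq_neg_curvature_div (hs : IsOpen s) (hs' : IsPreconnected s) {e : ℂ}
    (hγ : ∀ t ∈ s, HasDerivAt γ (T t) t) (hk : ∀ t ∈ s, HasDerivAt k (k₁ t) t)
    (heT : ∀ t ∈ s, e * T t = elasticaTangent δ lam k k₁ t) :
    ∃ c : ℝ, ∀ t ∈ s, (e * γ t).im + c = -(k t) / lam := by
  have him : ∀ t ∈ s, HasDerivAt (fun r ↦ (e * γ r).im) (-(k₁ t) / lam) t := fun t ht ↦ by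
    have h := imCLM.hasFDerivAt.comp_hasDerivAt t ((hγ t ht).const_mul e)
    rwa [heT t ht] at h
  have hcurv : ∀ t ∈ s, HasDerivAt (fun r ↦ -(k r) / lam) (-(k₁ t) / lam) t :=
    fun t ht ↦ (hk t ht).fun_neg.div_const lam
  obtain ⟨c, hc⟩ := hs.exists_eq_add_of_deriv_eq hs'
    (fun t ht ↦ (hcurv t ht).differentiableAt.differentiableWithinAt)
    (fun t ht ↦ (him t ht).differentiableAt.differentiableWithinAt)
    (fun t ht ↦ (hcurv t ht).deriv.trans (him t ht).deriv.symm)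
  exact ⟨c, fun t ht ↦ (hc ht).symm⟩

end Elastica

theorem elastica_to_dynamical_system_general {δ lam : ℝ} (hlam : lam ≠ 0) {s : Set ℝ}
    (hs : IsOpen s) (hs' : IsPreconnected s) {x y x₁ y₁ x₂ y₂ k k₁ k₂ : ℝ → ℝ}
    (hx : ∀ t ∈ s, HasDerivAt x (x₁ t) t) (hy : ∀ t ∈ s, HasDerivAt y (y₁ t) t)
    (hx₁ : ∀ t ∈ s, HasDerivAt x₁ (x₂ t) t) (hy₁ : ∀ t ∈ s, HasDerivAt y₁ (y₂ t) t)
    (hunit : ∀ t ∈ s, x₁ t ^ 2 + y₁ t ^ 2 = 1)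
    (hcurv : ∀ t ∈ s, k t = x₁ t * y₂ t - x₂ t * y₁ t)
    (hk : ∀ t ∈ s, HasDerivAt k (k₁ t) t) (hk₁ : ∀ t ∈ s, HasDerivAt k₁ (k₂ t) t)
    (hode : ∀ t ∈ s, 2 * k₂ t + k t ^ 3 - δ * k t = 0)
    (henergy : ∀ t ∈ s, k₁ t ^ 2 + (k t ^ 2 / 2 - δ / 2) ^ 2 = lam ^ 2) :
    ∃ θ c : ℝ,
      (∀ t ∈ s, Real.sin θ * x t + Real.cos θ * y t + c = -(k t) / lam) ∧
      (∀ t ∈ s, Real.cos θ * x₁ t - Real.sin θ * y₁ t = (k t ^ 2 / 2 - δ / 2) / lam) ∧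
      (∀ t ∈ s, Real.cos θ * x₂ t - Real.sin θ * y₂ t =
        lam * (Real.sin θ * x t + Real.cos θ * y t + c) *
          (Real.sin θ * x₁ t + Real.cos θ * y₁ t)) ∧
      (∀ t ∈ s, Real.sin θ * x₂ t + Real.cos θ * y₂ t =
        -(lam * (Real.sin θ * x t + Real.cos θ * y t + c) *
          (Real.cos θ * x₁ t - Real.sin θ * y₁ t))) := by
  have hT_unit : ∀ t ∈ s, ‖(⟨x₁ t, y₁ t⟩ : ℂ)‖ = 1 := fun t ht ↦ norm_mk_eq_one (hunit t ht)
  have hT : ∀ t ∈ s, HasDerivAt (fun r ↦ (⟨x₁ r, y₁ r⟩ : ℂ)) ⟨x₂ t, y₂ t⟩ t :=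
    fun t ht ↦ hasDerivAt_complex_mk (hx₁ t ht) (hy₁ t ht)
  have frenet : ∀ t ∈ s, (⟨x₂ t, y₂ t⟩ : ℂ) = k t * I * ⟨x₁ t, y₁ t⟩ := fun t ht ↦ by
    rw [hcurv t ht, ← signedCurvature_mk]
    exact eq_signedCurvature_mul_I_mul (T := fun r ↦ ⟨x₁ r, y₁ r⟩) (hT t ht)
      (eventually_of_mem (hs.mem_nhds ht) hT_unit)
  obtain ⟨θ, hθ⟩ := exists_exp_mul_eq_elasticaTangent hs hs' hlam
    (fun t ht ↦ frenet t ht ▸ hT t ht) hT_unit hk hk₁ hode henergy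
  obtain ⟨c, hc⟩ := exists_im_mul_add_eq_neg_curvature_div hs hs'
    (fun t ht ↦ hasDerivAt_complex_mk (hx t ht) (hy t ht)) hk hθ
  have hrot : ∀ t ∈ s, exp (θ * I) * ⟨x₂ t, y₂ t⟩ = k t * (I * (exp (θ * I) * ⟨x₁ t, y₁ t⟩)) :=
    fun t ht ↦ by rw [frenet t ht]; ring
  have hlam_mul : ∀ t, lam * (-(k t) / lam) = -(k t) := fun t ↦ mul_div_cancel₀ _ hlam
  simp only [← re_exp_ofReal_mul_I_mul_mk, ← im_exp_ofReal_mul_I_mul_mk]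
  refine ⟨θ, c, hc, fun t ht ↦ congrArg re (hθ t ht), fun t ht ↦ ?_, fun t ht ↦ ?_⟩
  · rw [hc t ht, hlam_mul, hrot t ht, re_ofReal_mul, I_mul_re, mul_neg, neg_mul]
  · rw [hc t ht, hlam_mul, hrot t ht, im_ofReal_mul, I_mul_im, neg_mul, neg_neg]

/-- Let `δ > 0` and let `γ = (x, y)` be a smooth unit-speed curve
on an (open, connected) interval `I` whose curvature `k = x'y'' - x''y'` satisfies
the elastica equation `2k'' + k³ - δk = 0`, and suppose the conserved quantity
`(k')² + (k²/2 - δ/2)²` equals `λ²` on `I` with `λ > 0`. Then there is an isometry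
of `ℝ²` (a rotation/reflection `(x, y) ↦ (cos θ · x - sin θ · εy,
sin θ · x + cos θ · εy)`, `ε = ±1`, followed by a translation) such that the
components `(x̃, ỹ)` of the transformed curve satisfy `x̃'' = λ ỹ ỹ'` and
`ỹ'' = -λ ỹ x̃'`; indeed one may take `ỹ = -k/λ` and `x̃' = (k²/2 - δ/2)/λ`. -/
theorem elastica_to_dynamical_system (δ lam : ℝ) (hδ : 0 < δ) (hlam : 0 < lam)
    (I : Set ℝ) (hI : IsOpen I) (hconn : IsPreconnected I)
    (x y x1 y1 x2 y2 k k1 k2 : ℝ → ℝ)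
    (hx : ∀ t ∈ I, HasDerivAt x (x1 t) t)
    (hy : ∀ t ∈ I, HasDerivAt y (y1 t) t)
    (hx1 : ∀ t ∈ I, HasDerivAt x1 (x2 t) t)
    (hy1 : ∀ t ∈ I, HasDerivAt y1 (y2 t) t)
    (hunit : ∀ t ∈ I, x1 t ^ 2 + y1 t ^ 2 = 1)
    (hk : ∀ t ∈ I, k t = x1 t * y2 t - x2 t * y1 t)
    (hk1 : ∀ t ∈ I, HasDerivAt k (k1 t) t)
    (hk2 : ∀ t ∈ I, HasDerivAt k1 (k2 t) t)
    (hode : ∀ t ∈ I, 2 * k2 t + k t ^ 3 - δ * k t = 0)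
    (hconst : ∀ t ∈ I, k1 t ^ 2 + (k t ^ 2 / 2 - δ / 2) ^ 2 = lam ^ 2) :
    ∃ θ cx cy ε : ℝ, (ε = 1 ∨ ε = -1) ∧
      (∀ t ∈ I,
        Real.sin θ * x t + Real.cos θ * (ε * y t) + cy = -(k t) / lam) ∧
      (∀ t ∈ I,
        Real.cos θ * x1 t - Real.sin θ * (ε * y1 t) =
          (k t ^ 2 / 2 - δ / 2) / lam) ∧
      (∀ t ∈ I,
        Real.cos θ * x2 t - Real.sin θ * (ε * y2 t) =
          lam * (Real.sin θ * x t + Real.cos θ * (ε * y t) + cy) *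
            (Real.sin θ * x1 t + Real.cos θ * (ε * y1 t))) ∧
      (∀ t ∈ I,
        Real.sin θ * x2 t + Real.cos θ * (ε * y2 t) =
          -(lam * (Real.sin θ * x t + Real.cos θ * (ε * y t) + cy) *
            (Real.cos θ * x1 t - Real.sin θ * (ε * y1 t)))) := by
  obtain ⟨θ, c, h⟩ := elastica_to_dynamical_system_general hlam.ne' hI hconn hx hy hx1 hy1 hunit hk
    hk1 hk2 hode hconst
  exact ⟨θ, 0, c, 1, .inl rfl, by simpa only [one_mul] using h⟩
end

section
/- For all angles α₁, α₂ with 0 < α₁ ≤ α₂ ≤ 3π/4, one has 4 √(α₁ + α₂ sin α₂ / sin α₁) · √(α₁ + α₂ sin α₁ / sin α₂ + sin α₁) < 21.2075. -/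
/-!
Up to constants, the two radicands are the bending energy and the length of the network. Writing
`a = α₁`, `b = α₂`, their product expands to the symmetric expression
`a² + b² + (a / sin a)(b sin b) + (b / sin b)(a sin a) + a sin a + b sin b`,
so it suffices to bound `x / sin x`, which is increasing, and `x sin x` separately. Replacing `sin`
by its tangent at `2π/3`, close to the maximiser of `x sin x`, turns the latter into a quadratic.
-/

open Real Set

lemma le_add_mul_sub_of_concaveOn {s : Set ℝ} {f : ℝ → ℝ} {f' x y : ℝ} (hf : ConcaveOn ℝ s f)
    (hx : x ∈ s) (hy : y ∈ s) (hf' : HasDerivWithinAt f f' s x) :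
    f y ≤ f x + f' * (y - x) := by
  rcases lt_trichotomy x y with hxy | rfl | hyx
  · have hslope := hf.slope_le_of_hasDerivWithinAt hx hy hxy hf'
    rw [slope_def_field, div_le_iff₀ (sub_pos.2 hxy)] at hslope
    linarith
  · simp
  · have hslope := hf.le_slope_of_hasDerivWithinAt hy hx hyx hf'
    rw [slope_def_field, le_div_iff₀ (sub_pos.2 hyx)] at hslope
    linarith

lemma mul_sin_le_of_cos_neg {c x : ℝ} (hc : c ∈ Icc 0 π) (hcos : cos c < 0) (hx : x ∈ Icc 0 π) :
    x * sin x ≤ (sin c - c * cos c) ^ 2 / (-4 * cos c) := by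
  have htangent : sin x ≤ sin c + cos c * (x - c) :=
    le_add_mul_sub_of_concaveOn strictConcaveOn_sin_Icc.concaveOn hc hx
      (hasDerivAt_sin c).hasDerivWithinAt
  calc
    x * sin x ≤ x * (sin c + cos c * (x - c)) := mul_le_mul_of_nonneg_left htangent hx.1
    _ ≤ (sin c - c * cos c) ^ 2 / (-4 * cos c) := by
      rw [le_div_iff₀ (by linarith)]
      linarith [sq_nonneg (sin c - c * cos c + 2 * x * cos c)]

lemma sin_two_pi_div_three : sin (2 * π / 3) = √3 / 2 := by
  rw [show 2 * π / 3 = π - π / 3 by ring, sin_pi_sub, sin_pi_div_three]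

lemma cos_two_pi_div_three : cos (2 * π / 3) = -(1 / 2) := by
  rw [show 2 * π / 3 = π - π / 3 by ring, cos_pi_sub, cos_pi_div_three]

lemma sin_three_pi_div_four : sin (3 * π / 4) = √2 / 2 := by
  rw [show 3 * π / 4 = π - π / 4 by ring, sin_pi_sub, sin_pi_div_four]

lemma mul_sin_lt {x : ℝ} (hx : x ∈ Icc 0 π) : x * sin x < 1.84 := by
  have hsqrt : √3 < 1.7321 := (sqrt_lt' (by norm_num)).2 (by norm_num)
  have hbound : x * sin x ≤ (√3 / 2 + π / 3) ^ 2 / 2 := by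
    have h := mul_sin_le_of_cos_neg (c := 2 * π / 3)
      ⟨by positivity, by linarith [pi_pos]⟩ (by norm_num [cos_two_pi_div_three]) hx
    rw [sin_two_pi_div_three, cos_two_pi_div_three] at h
    convert h using 1
    ring
  calc
    x * sin x ≤ (√3 / 2 + π / 3) ^ 2 / 2 := hbound
    _ ≤ (1.7321 / 2 + 3.1416 / 3) ^ 2 / 2 := by gcongr; exact pi_lt_d4.le
    _ < 1.84 := by norm_num

lemma div_sin_le_div_sin {x y : ℝ} (hx : 0 < x) (hxy : x ≤ y) (hy : y < π) :
    x / sin x ≤ y / sin y := by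
  have hy₀ : 0 < y := hx.trans_le hxy
  have hsy : 0 < sin y := sin_pos_of_pos_of_lt_pi hy₀ hy
  have hslope : sin y / y ≤ sin x / x := by
    simpa [slope_def_field] using strictConcaveOn_sin_Icc.concaveOn.slope_anti
      (left_mem_Icc.2 pi_pos.le) ⟨⟨hx.le, (hxy.trans_lt hy).le⟩, hx.ne'⟩
      ⟨⟨hy₀.le, hy.le⟩, hy₀.ne'⟩ hxy
  simpa only [inv_div] using inv_anti₀ (div_pos hsy hy₀) hslope

lemma three_pi_div_four_div_sin_lt : 3 * π / 4 / sin (3 * π / 4) < 3.34 := by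
  have hsqrt : 1.414 ≤ √2 := le_sqrt_of_sq_le (by norm_num)
  rw [sin_three_pi_div_four, div_lt_iff₀ (by positivity)]
  linarith [pi_lt_d4]

lemma bending_mul_length_le {α₁ α₂ β M : ℝ} (h₁ : 0 < α₁) (h₁β : α₁ ≤ β) (h₂ : 0 < α₂)
    (h₂β : α₂ ≤ β) (hβ : β < π) (hM₁ : α₁ * sin α₁ ≤ M) (hM₂ : α₂ * sin α₂ ≤ M) :
    (α₁ + α₂ * sin α₂ / sin α₁) * (α₁ + α₂ * sin α₁ / sin α₂ + sin α₁) ≤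
      2 * β ^ 2 + 2 * (β / sin β + 1) * M := by
  have hs₁ : 0 < sin α₁ := sin_pos_of_pos_of_lt_pi h₁ (h₁β.trans_lt hβ)
  have hs₂ : 0 < sin α₂ := sin_pos_of_pos_of_lt_pi h₂ (h₂β.trans_lt hβ)
  have hq₁ : α₁ / sin α₁ ≤ β / sin β := div_sin_le_div_sin h₁ h₁β hβ
  have hq₂ : α₂ / sin α₂ ≤ β / sin β := div_sin_le_div_sin h₂ h₂β hβ
  have hβ_nonneg : 0 ≤ β / sin β := (div_pos h₁ hs₁).le.trans hq₁
  calc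
    (α₁ + α₂ * sin α₂ / sin α₁) * (α₁ + α₂ * sin α₁ / sin α₂ + sin α₁) =
        α₁ ^ 2 + α₂ ^ 2 + α₁ / sin α₁ * (α₂ * sin α₂) + α₂ / sin α₂ * (α₁ * sin α₁) +
          α₁ * sin α₁ + α₂ * sin α₂ := by
      field_simp
      ring
    _ ≤ β ^ 2 + β ^ 2 + β / sin β * M + β / sin β * M + M + M := by gcongr
    _ = 2 * β ^ 2 + 2 * (β / sin β + 1) * M := by ring

theorem double_bubble_energy_lt_figure_eight_general (α₁ α₂ : ℝ) (h₁ : α₁ ∈ Ioc 0 (3 * π / 4))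
    (h₂ : α₂ ∈ Ioc 0 (3 * π / 4)) :
    4 * √(α₁ + α₂ * sin α₂ / sin α₁) * √(α₁ + α₂ * sin α₁ / sin α₂ + sin α₁) < 21.2075 := by
  have hβ : 3 * π / 4 < π := by linarith [pi_pos]
  obtain ⟨h₁, h₁β⟩ := h₁
  obtain ⟨h₂, h₂β⟩ := h₂
  have hs₁ : 0 < sin α₁ := sin_pos_of_pos_of_lt_pi h₁ (h₁β.trans_lt hβ)
  have hs₂ : 0 < sin α₂ := sin_pos_of_pos_of_lt_pi h₂ (h₂β.trans_lt hβ)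
  have hprod : (α₁ + α₂ * sin α₂ / sin α₁) * (α₁ + α₂ * sin α₁ / sin α₂ + sin α₁) < 5.3 ^ 2 :=
    calc
      _ ≤ 2 * (3 * π / 4) ^ 2 + 2 * (3 * π / 4 / sin (3 * π / 4) + 1) * 1.84 :=
        bending_mul_length_le h₁ h₁β h₂ h₂β hβ
          (mul_sin_lt ⟨h₁.le, h₁β.trans hβ.le⟩).le (mul_sin_lt ⟨h₂.le, h₂β.trans hβ.le⟩).le
      _ ≤ 2 * (3 * 3.1416 / 4) ^ 2 + 2 * (3.34 + 1) * 1.84 := by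
        gcongr
        exacts [pi_lt_d4.le, three_pi_div_four_div_sin_lt.le]
      _ < 5.3 ^ 2 := by norm_num
  have hsqrt : √(α₁ + α₂ * sin α₂ / sin α₁) * √(α₁ + α₂ * sin α₁ / sin α₂ + sin α₁) < 5.3 := by
    rw [← sqrt_mul (by positivity)]
    exact (sqrt_lt' (by norm_num)).2 hprod
  linarith

/-- For all angles `0 < α₁ ≤ α₂ ≤ 3π/4`, the optimally rescaled
penalized elastic energy of the generalized double bubble satisfies
`4√(α₁ + α₂ sin α₂/sin α₁) · √(α₁ + α₂ sin α₁/sin α₂ + sin α₁) < 21.2075`. -/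
theorem double_bubble_energy_lt_figure_eight (α₁ α₂ : ℝ)
    (h₁ : 0 < α₁) (h₁₂ : α₁ ≤ α₂) (h₂ : α₂ ≤ 3 * Real.pi / 4) :
    4 * Real.sqrt (α₁ + α₂ * Real.sin α₂ / Real.sin α₁) *
        Real.sqrt (α₁ + α₂ * Real.sin α₁ / Real.sin α₂ + Real.sin α₁) <
      21.2075 :=
  double_bubble_energy_lt_figure_eight_general α₁ α₂ ⟨h₁, h₁₂.trans h₂⟩ ⟨h₁.trans_le h₁₂, h₂⟩
end
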